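/- For every n ∈ ℕ with n ≥ 1 and every real x, N_{n+1}(x²)² − N_{n+2}(x²)·N_n(x²) = (1/64)·[(1+x)^{4n+4} + (1−x)^{4n+4} − 2(1 + (8n² + 16n + 6)x² + x⁴)(1−x²)^{2n}]. -/

import Mathlib

/-!
The coefficient identity `4 k (n - k) C(2n+2, 2k+1) = (2n+1) ((2n+2) C(2n, 2k) - C(2n+2, 2k+1))`
turns `N_n(x²)` into a combination of the even part of `(1+x)^(2n)` and the odd part of
`(1+x)^(2n+2)`, which gives the closed form (`mul_minusculeN_eval`)
`16 x N_n(x²) = (2n+2) x ((1+x)^(2n) + (1-x)^(2n)) - ((1+x)^(2n+2) - (1-x)^(2n+2))`.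
For `x ≠ 0` the theorem, multiplied by `x²`, is then a polynomial identity in `n`, `x`,
`(1+x)^(2n)` and `(1-x)^(2n)`. For `x = 0` both sides vanish, since `N_n` has no constant term.
-/

/-- The type A minuscule polynomial
`N_n(x) = (1/(4n+2)) ∑_{k=1}^{n-1} k(n-k) C(2n+2, 2k+1) x^k`. -/
noncomputable def minusculeN (n : ℕ) : Polynomial ℝ :=
  ∑ k ∈ Finset.Icc 1 (n - 1),
    Polynomial.C (((k * (n - k) * Nat.choose (2 * n + 2) (2 * k + 1) : ℕ) : ℝ) /
      (4 * (n : ℝ) + 2)) * Polynomial.X ^ k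

lemma sum_range_two_mul (f : ℕ → ℝ) (N : ℕ) :
    ∑ i ∈ Finset.range (2 * N), f i =
      ∑ k ∈ Finset.range N, (f (2 * k) + f (2 * k + 1)) := by
  induction N with
  | zero => simp
  | succ N ih =>
    rw [show 2 * (N + 1) = 2 * N + 1 + 1 by ring, Finset.sum_range_succ, Finset.sum_range_succ,
      Finset.sum_range_succ, ih]
    ring

lemma sum_choose_even (n : ℕ) (x : ℝ) :
    (1 + x) ^ (2 * n) + (1 - x) ^ (2 * n) =
      2 * ∑ k ∈ Finset.range (n + 1), ((2 * n).choose (2 * k) : ℝ) * x ^ (2 * k) := by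
  -- The range is extended by one vanishing term so that its length is even.
  have h (y : ℝ) : (1 + y) ^ (2 * n) =
      ∑ i ∈ Finset.range (2 * (n + 1)), ((2 * n).choose i : ℝ) * y ^ i := by
    rw [show 2 * (n + 1) = 2 * n + 1 + 1 by ring, Finset.sum_range_succ, add_comm 1 y, add_pow]
    simp [mul_comm]
  rw [sub_eq_add_neg, h, h, sum_range_two_mul, sum_range_two_mul, ← Finset.sum_add_distrib,
    Finset.mul_sum]
  refine Finset.sum_congr rfl fun k _ => ?_
  rw [(even_two_mul k).neg_pow, (odd_two_mul_add_one k).neg_pow]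
  ring

lemma sum_choose_odd (n : ℕ) (x : ℝ) :
    (1 + x) ^ (2 * n + 2) - (1 - x) ^ (2 * n + 2) =
      2 * ∑ k ∈ Finset.range (n + 1),
        ((2 * n + 2).choose (2 * k + 1) : ℝ) * x ^ (2 * k + 1) := by
  have h (y : ℝ) : (1 + y) ^ (2 * n + 2) =
      ∑ i ∈ Finset.range (2 * (n + 1)), ((2 * n + 2).choose i : ℝ) * y ^ i +
        y ^ (2 * (n + 1)) := by
    rw [add_comm 1 y, add_pow, Finset.sum_range_succ]
    simp [mul_comm, show (n + 1) * 2 = n * 2 + 2 by ring]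
  rw [sub_eq_add_neg 1 x, h, h, sum_range_two_mul, sum_range_two_mul,
    (even_two_mul (n + 1)).neg_pow, add_sub_add_right_eq_sub, ← Finset.sum_sub_distrib,
    Finset.mul_sum]
  refine Finset.sum_congr rfl fun k _ => ?_
  rw [(even_two_mul k).neg_pow, (odd_two_mul_add_one k).neg_pow]
  ring

lemma minusculeN_coeff_identity {n k : ℕ} (hk : k ≤ n) :
    4 * ((k * (n - k) * Nat.choose (2 * n + 2) (2 * k + 1) : ℕ) : ℝ) =
      (2 * n + 1) * ((2 * n + 2) * ((2 * n).choose (2 * k) : ℝ) -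
        ((2 * n + 2).choose (2 * k + 1) : ℝ)) := by
  obtain ⟨d, rfl⟩ := Nat.exists_eq_add_of_le hk
  have h1 := Nat.add_one_mul_choose_eq (2 * (k + d) + 1) (2 * k)
  have h2 := Nat.choose_mul_succ_eq (2 * (k + d)) (2 * k)
  rw [show 2 * (k + d) + 1 - 2 * k = 2 * d + 1 by omega] at h2
  have h1' := congrArg (Nat.cast : ℕ → ℝ) h1
  have h2' := congrArg (Nat.cast : ℕ → ℝ) h2
  rw [show k + d - k = d by omega]
  simp only [add_assoc, Nat.reduceAdd] at h1' h2' ⊢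
  push_cast at h1' h2' ⊢
  linear_combination -(2 * (d : ℝ) + 1) * h1' - (2 * ((k : ℝ) + d) + 2) * h2'

/-- The summands `k = 0` and `k = n` vanish, so the sum may run over `0 ≤ k ≤ n`. -/
lemma minusculeN_eval (n : ℕ) (y : ℝ) :
    (minusculeN n).eval y = ∑ k ∈ Finset.range (n + 1),
      ((k * (n - k) * Nat.choose (2 * n + 2) (2 * k + 1) : ℕ) : ℝ) / (4 * (n : ℝ) + 2) *
        y ^ k := by
  simp only [minusculeN, Polynomial.eval_finsetSum, Polynomial.eval_mul, Polynomial.eval_C,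
    Polynomial.eval_pow, Polynomial.eval_X]
  refine Finset.sum_subset (fun k hk => ?_) fun k hk hk' => ?_
  · simp only [Finset.mem_Icc, Finset.mem_range] at *
    omega
  · have : k = 0 ∨ n - k = 0 := by
      simp only [Finset.mem_Icc, Finset.mem_range] at *
      omega
    rcases this with h | h <;> simp [h]

/-- Closed form of `N_n(x²)`, multiplied by `x` because the odd part of `(1+x)^(2n+2)` is
divisible by `x`. -/
lemma mul_minusculeN_eval (n : ℕ) (x : ℝ) :
    16 * (x * (minusculeN n).eval (x ^ 2)) =
      (2 * n + 2) * x * ((1 + x) ^ (2 * n) + (1 - x) ^ (2 * n)) -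
        ((1 + x) ^ (2 * n + 2) - (1 - x) ^ (2 * n + 2)) := by
  rw [sum_choose_even, sum_choose_odd, minusculeN_eval]
  simp only [Finset.mul_sum]
  rw [← Finset.sum_sub_distrib]
  refine Finset.sum_congr rfl fun k hk => ?_
  have hc := minusculeN_coeff_identity (Nat.lt_succ_iff.mp (Finset.mem_range.mp hk))
  have hn : (4 * (n : ℝ) + 2) ≠ 0 := by positivity
  rw [← pow_mul, pow_succ]
  field_simp
  linear_combination 4 * x * x ^ (2 * k) * hc

/-- For `n ≥ 1` and every real `x`,
`N_{n+1}(x²)² − N_{n+2}(x²) N_n(x²)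
  = (1/64)[(1+x)^{4n+4} + (1−x)^{4n+4} − 2(1 + (8n²+16n+6)x² + x⁴)(1−x²)^{2n}]`. -/
theorem minusculeN_sq_difference (n : ℕ) (hn : 1 ≤ n) (x : ℝ) :
    ((minusculeN (n + 1)).eval (x ^ 2)) ^ 2 -
        (minusculeN (n + 2)).eval (x ^ 2) * (minusculeN n).eval (x ^ 2) =
      1 / 64 * ((1 + x) ^ (4 * n + 4) + (1 - x) ^ (4 * n + 4) -
        2 * (1 + (8 * (n : ℝ) ^ 2 + 16 * n + 6) * x ^ 2 + x ^ 4) * (1 - x ^ 2) ^ (2 * n)) := by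
  rcases eq_or_ne x 0 with rfl | hx
  · have h (m : ℕ) : (minusculeN m).eval ((0 : ℝ) ^ 2) = 0 := by
      rw [minusculeN_eval, Finset.sum_eq_zero]
      intro k _
      rcases Nat.eq_zero_or_pos k with rfl | hk
      · simp
      · simp [hk.ne']
    rw [h, h, h]
    norm_num
  · have h0 := mul_minusculeN_eval n x
    have h1 := mul_minusculeN_eval (n + 1) x
    have h2 := mul_minusculeN_eval (n + 2) x
    rw [show (1 - x ^ 2) ^ (2 * n) = (1 + x) ^ (2 * n) * (1 - x) ^ (2 * n) by
        rw [← mul_pow]; ring,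
      show 4 * n + 4 = 2 * n + 2 * n + 4 by ring]
    rw [show 2 * (n + 1) = 2 * n + 2 by ring] at h1
    rw [show 2 * (n + 2) = 2 * n + 4 by ring] at h2
    push_cast at h1 h2
    simp only [pow_add] at h0 h1 h2 ⊢
    generalize (1 + x) ^ (2 * n) = A at *
    generalize (1 - x) ^ (2 * n) = B at *
    generalize (minusculeN n).eval (x ^ 2) = P at *
    generalize (minusculeN (n + 1)).eval (x ^ 2) = Q at *
    generalize (minusculeN (n + 2)).eval (x ^ 2) = R at *
    have hx2 : 256 * x ^ 2 ≠ 0 := by positivity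
    apply mul_left_cancel₀ hx2
    rw [show 256 * x ^ 2 * (Q ^ 2 - R * P) =
        (16 * (x * Q)) ^ 2 - (16 * (x * R)) * (16 * (x * P)) by ring, h0, h1, h2]
    ring
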